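/- Let f : ℝ → ℝ be concave and non-decreasing on (0, ∞) and let q > 1 be real. For all positive integers p and n, one has (q^{f(n/(2p) + 1)})^p ≤ (q^{f(n/(2(p+1)) + 1)})^{p+1}. -/

import Mathlib

/-! Put `φ t = f (c / t + 1)`. For `0 < p ≤ r`, the point `c / r + 1` is the convex combination
of `c / p + 1` and `1` with weights `p / r` and `1 - p / r`, so concavity together with `0 ≤ f 1`
gives `(p / r) * φ p ≤ φ r`, that is, `p * φ p ≤ r * φ r`. -/

section Concave

variable {𝕜 E β : Type*} [AddCommGroup E] [AddCommMonoid β] [PartialOrder β]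
  [IsOrderedAddMonoid β] {s : Set E} {f : E → β} {x₀ v : E}

theorem smul_map_add_le_map_smul_add_of_concaveOn [Ring 𝕜] [PartialOrder 𝕜]
    [IsOrderedAddMonoid 𝕜] [Module 𝕜 E] [Module 𝕜 β] [PosSMulMono 𝕜 β]
    (hf : ConcaveOn 𝕜 s f) (hx₀ : x₀ ∈ s) (hfx₀ : 0 ≤ f x₀) (hv : v + x₀ ∈ s)
    {a : 𝕜} (ha₀ : 0 ≤ a) (ha₁ : a ≤ 1) :
    a • f (v + x₀) ≤ f (a • v + x₀) :=
  have hb₀ : 0 ≤ 1 - a := sub_nonneg.2 ha₁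
  calc
    a • f (v + x₀) ≤ a • f (v + x₀) + (1 - a) • f x₀ :=
      le_add_of_nonneg_right (smul_nonneg hb₀ hfx₀)
    _ ≤ f (a • (v + x₀) + (1 - a) • x₀) := hf.2 hv hx₀ ha₀ hb₀ (add_sub_cancel a 1)
    _ = f (a • v + x₀) := by
      rw [smul_add, add_assoc, ← add_smul, add_sub_cancel, one_smul]

theorem monotoneOn_smul_map_inv_smul_add_of_concaveOn [Field 𝕜] [LinearOrder 𝕜]
    [IsStrictOrderedRing 𝕜] [Module 𝕜 E] [Module 𝕜 β] [PosSMulMono 𝕜 β]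
    (hf : ConcaveOn 𝕜 s f) (hx₀ : x₀ ∈ s) (hfx₀ : 0 ≤ f x₀) :
    MonotoneOn (fun t : 𝕜 ↦ t • f (t⁻¹ • v + x₀)) {t | 0 < t ∧ t⁻¹ • v + x₀ ∈ s} := by
  rintro p ⟨hp, hps⟩ r ⟨hr, -⟩ hpr
  have hscaled : (p / r) • f (p⁻¹ • v + x₀) ≤ f (r⁻¹ • v + x₀) := by
    have hpoint : (p / r) • p⁻¹ • v = r⁻¹ • v := by
      rw [smul_smul]
      congr 1
      field_simp
    simpa only [hpoint] using smul_map_add_le_map_smul_add_of_concaveOn hf hx₀ hfx₀ hps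
      (div_nonneg hp.le hr.le) (div_le_one_of_le₀ hpr hr.le)
  calc
    p • f (p⁻¹ • v + x₀) = r • (p / r) • f (p⁻¹ • v + x₀) := by
      rw [smul_smul, mul_div_cancel₀ p hr.ne']
    _ ≤ r • f (r⁻¹ • v + x₀) := smul_le_smul_of_nonneg_left hscaled hr.le

end Concave

theorem stmt_6_general {f : ℝ → ℝ} (hf : ConcaveOn ℝ (Set.Ici 1) f) (hf₁ : 0 ≤ f 1)
    {q : ℝ} (hq : 1 ≤ q) {c : ℝ} (hc : 0 ≤ c) :
    MonotoneOn (fun t : ℝ ↦ (q ^ f (c / t + 1)) ^ t) (Set.Ioi 0) := by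
  have hdomain {t : ℝ} (ht : 0 < t) : 0 < t ∧ t⁻¹ • c + 1 ∈ Set.Ici (1 : ℝ) :=
    ⟨ht, le_add_of_nonneg_left (mul_nonneg (inv_nonneg.2 ht.le) hc)⟩
  intro p hp r hr hpr
  have hexponent : p * f (c / p + 1) ≤ r * f (c / r + 1) := by
    simpa only [smul_eq_mul, inv_mul_eq_div] using
      monotoneOn_smul_map_inv_smul_add_of_concaveOn hf Set.self_mem_Ici hf₁
        (hdomain hp) (hdomain hr) hpr
  have hq₀ : 0 ≤ q := zero_le_one.trans hq
  simpa only [← Real.rpow_mul hq₀, mul_comm] using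
    Real.rpow_le_rpow_of_exponent_le hq hexponent

/-- for `f` concave, non-decreasing and positive on `(0,∞)` and `q > 1`,
`(q ^ f (n/(2p) + 1))^p ≤ (q ^ f (n/(2(p+1)) + 1))^(p+1)`. -/
theorem stmt_6 (f : ℝ → ℝ) (hconc : ConcaveOn ℝ (Set.Ioi (0 : ℝ)) f)
    (hmono : MonotoneOn f (Set.Ioi (0 : ℝ))) (hpos : ∀ x : ℝ, 0 < x → 0 < f x)
    (q : ℝ) (hq : 1 < q) (p n : ℕ) (hp : 0 < p) (hn : 0 < n) :
    (q ^ f ((n : ℝ) / (2 * (p : ℝ)) + 1)) ^ p ≤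
      (q ^ f ((n : ℝ) / (2 * ((p : ℝ) + 1)) + 1)) ^ (p + 1) := by
  have hconc₁ : ConcaveOn ℝ (Set.Ici 1) f :=
    hconc.subset (Set.Ici_subset_Ioi.2 one_pos) (convex_Ici 1)
  have hp₀ : (0 : ℝ) < p := Nat.cast_pos.2 hp
  simpa only [div_div, ← Real.rpow_natCast, Nat.cast_add_one] using
    stmt_6_general hconc₁ (hpos 1 one_pos).le hq.le (c := n / 2) (by positivity)
      (Set.mem_Ioi.2 hp₀) (Set.mem_Ioi.2 (add_pos hp₀ one_pos)) (lt_add_one (p : ℝ)).le
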